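/- Every irreducible variety V ⊆ ℂ^n of dimension d satisfies deg(V) ≤ ∏_{i=1}^{n−d} δ_i(V). -/

import Mathlib

open MvPolynomial Set

noncomputable section

namespace Paper

variable (n : ℕ)

/-- The zero locus in `ℂⁿ` of a set of polynomials. -/
def zeroLocus (I : Set (MvPolynomial (Fin n) ℂ)) : Set (Fin n → ℂ) :=
  {x | ∀ f ∈ I, eval x f = 0}

/-- A subset of `ℂⁿ` is algebraic if it is the zero locus of a set of polynomials. -/
def IsAlgebraicSet (V : Set (Fin n → ℂ)) : Prop :=
  ∃ I : Set (MvPolynomial (Fin n) ℂ), V = zeroLocus n I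

/-- An irreducible (affine) variety in `ℂⁿ`: a nonempty algebraic set that is not covered
by two algebraic sets unless it is contained in one of them. -/
def IsIrredVariety (V : Set (Fin n → ℂ)) : Prop :=
  IsAlgebraicSet n V ∧ V.Nonempty ∧
    ∀ V₁ V₂ : Set (Fin n → ℂ), IsAlgebraicSet n V₁ → IsAlgebraicSet n V₂ →
      V ⊆ V₁ ∪ V₂ → V ⊆ V₁ ∨ V ⊆ V₂

/-- There is a strictly increasing chain of `d + 1` irreducible varieties inside `V`. -/
def HasChain (V : Set (Fin n → ℂ)) (d : ℕ) : Prop :=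
  ∃ W : Fin (d + 1) → Set (Fin n → ℂ),
    (∀ i, IsIrredVariety n (W i)) ∧ (∀ i j : Fin (d + 1), i < j → W i ⊂ W j) ∧
      W (Fin.last d) ⊆ V

/-- The (Krull) dimension of a subset of `ℂⁿ`, as the length of the longest chain of
irreducible subvarieties. -/
def dim (V : Set (Fin n → ℂ)) : ℕ := sSup {d | HasChain n V d}

/-- `W` is an irreducible component of `X`: an irreducible subvariety that is maximal among
irreducible subvarieties of `X`. -/
def IsIrredComponent (W X : Set (Fin n → ℂ)) : Prop :=
  IsIrredVariety n W ∧ W ⊆ X ∧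
    ∀ W', IsIrredVariety n W' → W ⊆ W' → W' ⊆ X → W' = W

/-- The degree of an irreducible variety `V ⊆ ℂⁿ` of dimension `d` (i.e. the degree of its
projective closure): the largest finite number of points in which an affine-linear subspace of
dimension `n - d` meets `V`. -/
def degree (V : Set (Fin n → ℂ)) : ℕ :=
  sSup { m | ∃ L : AffineSubspace ℂ (Fin n → ℂ),
    Module.finrank ℂ L.direction = n - dim n V ∧ (V ∩ ↑L).Finite ∧ (V ∩ ↑L).ncard = m }

/-- The degree of an algebraic set: the sum of the degrees of its irreducible components. -/
def degreeSum (X : Set (Fin n → ℂ)) : ℕ :=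
  ∑ᶠ W ∈ {W | IsIrredComponent n W X}, degree n W

/-- The maximal dimension of an irreducible component of `X` containing `V` equals `e`. -/
def MaxCompDimEq (X V : Set (Fin n → ℂ)) (e : ℕ) : Prop :=
  (∃ W, IsIrredComponent n W X ∧ V ⊆ W ∧ dim n W = e) ∧
    ∀ W, IsIrredComponent n W X → V ⊆ W → dim n W ≤ e

/-- The partial degrees `δ_i(V)` of an irreducible variety `V`:  the minimal `δ` such that there
are polynomials of degree at most `δ` cutting out an algebraic set containing `V` whose
irreducible components containing `V` have maximal dimension `n - i`.  By convention
`δ_0(V) = 0`. -/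
def partialDeg (V : Set (Fin n → ℂ)) (i : ℕ) : ℕ :=
  if i = 0 then 0
  else sInf { δ | ∃ I : Finset (MvPolynomial (Fin n) ℂ),
    (∀ f ∈ I, f.totalDegree ≤ δ) ∧ V ⊆ zeroLocus n ↑I ∧
      MaxCompDimEq n (zeroLocus n ↑I) V (n - i) }

/-- The partial degrees as extended naturals, with the convention `δ_i(V) = ∞` for
`i > n - dim V`. -/
def partialDegE (V : Set (Fin n → ℂ)) (i : ℕ) : ℕ∞ :=
  if i ≤ n - dim n V then (partialDeg n V i : ℕ∞) else ⊤

/-- `δ(V)` for an irreducible variety `V`: the minimal `δ` such that `V` is an irreducible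
component of the zero set of a finite family of polynomials of degree at most `δ`. -/
def deltaIrr (V : Set (Fin n → ℂ)) : ℕ :=
  sInf { δ | ∃ I : Finset (MvPolynomial (Fin n) ℂ),
    (∀ f ∈ I, f.totalDegree ≤ δ) ∧ IsIrredComponent n V (zeroLocus n ↑I) }

/-- `δ(V)` for a general algebraic set `V`: the minimal `δ` such that every irreducible
component of `V` is an irreducible component of the zero set of a finite family of polynomials
of degree at most `δ`. -/
def deltaSet (V : Set (Fin n → ℂ)) : ℕ :=
  sInf { δ | ∃ I : Finset (MvPolynomial (Fin n) ℂ),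
    (∀ f ∈ I, f.totalDegree ≤ δ) ∧
      ∀ W, IsIrredComponent n W V → IsIrredComponent n W (zeroLocus n ↑I) }

/-- An algebraic set all of whose irreducible components have dimension `d`. -/
def IsAlgSetOfDim (V : Set (Fin n → ℂ)) (d : ℕ) : Prop :=
  IsAlgebraicSet n V ∧ V.Nonempty ∧ ∀ W, IsIrredComponent n W V → dim n W = d

/-- `Δ_i(V) = max (deg V / (δ_{i+1}(V) ⋯ δ_{n-d}(V))) 1`. -/
def Delta (V : Set (Fin n → ℂ)) (i : ℕ) : ℝ :=
  max ((degree n V : ℝ) / ∏ j ∈ Finset.Icc (i + 1) (n - dim n V), (partialDeg n V j : ℝ)) 1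

/-- `i` is admissible with respect to `V` if `δ_{i+1}(V) > 2 i δ_i(V)` (with the convention
`δ_i(V) = ∞` for `i > n - dim V`). -/
def Admissible (V : Set (Fin n → ℂ)) (i : ℕ) : Prop :=
  ((2 * i : ℕ) : ℕ∞) * partialDegE n V i < partialDegE n V (i + 1)

/-- The interval `ℛ_i(V) = [c₁ δ_i(V)^{n-i} Δ_i(V), (c₀/2) δ_{i+1}(V)^{n-i} Δ_i(V)]`,
where `δ_{n-d+1}(V) = ∞` makes the last interval a half-line. -/
def RSet (c0 c1 : ℝ) (V : Set (Fin n → ℂ)) (i : ℕ) : Set ℝ :=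
  if i = n - dim n V then
    Set.Ici (c1 * (partialDeg n V i : ℝ) ^ (n - i) * Delta n V i)
  else
    Set.Icc (c1 * (partialDeg n V i : ℝ) ^ (n - i) * Delta n V i)
      ((c0 / 2) * (partialDeg n V (i + 1) : ℝ) ^ (n - i) * Delta n V i)

/-- The interval `ℛ^l_{s,τ}(V) = [τ δ_s(V)^{n-(s+l)} Δ_s(V), τ δ_{s+1}(V)^{n-(s+l)} Δ_s(V)]`,
where `δ_{n-d+1}(V) = ∞` makes the last interval a half-line. -/
def RlSet (τ : ℝ) (l : ℕ) (V : Set (Fin n → ℂ)) (s : ℕ) : Set ℝ :=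
  if s = n - dim n V then
    Set.Ici (τ * (partialDeg n V s : ℝ) ^ (n - (s + l)) * Delta n V s)
  else
    Set.Icc (τ * (partialDeg n V s : ℝ) ^ (n - (s + l)) * Delta n V s)
      (τ * (partialDeg n V (s + 1) : ℝ) ^ (n - (s + l)) * Delta n V s)

/-- The ideal `I(V)` of polynomials vanishing on `V ⊆ ℂⁿ`. -/
def vanishingIdeal (V : Set (Fin n → ℂ)) : Ideal (MvPolynomial (Fin n) ℂ) where
  carrier := {f | ∀ x ∈ V, eval x f = 0}
  add_mem' := by
    intro a b ha hb x hx
    simp [ha x hx, hb x hx]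
  zero_mem' := by
    intro x hx
    simp
  smul_mem' := by
    intro c f hf x hx
    simp [smul_eq_mul, hf x hx]

/-- The ideal `I_ℝ(V)` of real polynomials vanishing on `V ⊆ ℂⁿ`. -/
def vanishingIdealR (V : Set (Fin n → ℂ)) : Ideal (MvPolynomial (Fin n) ℝ) :=
  (vanishingIdeal n V).comap (MvPolynomial.map (algebraMap ℝ ℂ))

/-- The affine Hilbert function `H_{I(V)}(m) = dim_ℂ ℂ[x]_{≤ m} / I(V)_{≤ m}`, realised as the
dimension of the image of the space of polynomials of total degree at most `m` in the quotient
ring `ℂ[x]/I(V)`. -/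
def hilbert (V : Set (Fin n → ℂ)) (m : ℕ) : ℕ :=
  Module.finrank ℂ
    (Submodule.map (Ideal.Quotient.mkₐ ℂ (vanishingIdeal n V)).toLinearMap
      (restrictTotalDegree (Fin n) ℂ m))

/-- The real affine Hilbert function `H_{I(V),ℝ}(m) = dim_ℝ ℝ[x]_{≤ m} / I_ℝ(V)_{≤ m}`. -/
def hilbertR (V : Set (Fin n → ℂ)) (m : ℕ) : ℕ :=
  Module.finrank ℝ
    (Submodule.map (Ideal.Quotient.mkₐ ℝ (vanishingIdealR n V)).toLinearMap
      (restrictTotalDegree (Fin n) ℝ m))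

/-- The inclusion `ℝⁿ → ℂⁿ`. -/
def toC (x : Fin n → ℝ) : Fin n → ℂ := fun i => (x i : ℂ)

/-- The set of real points of `V ⊆ ℂⁿ`. -/
def realPts (V : Set (Fin n → ℂ)) : Set (Fin n → ℝ) := {x | toC n x ∈ V}

/-- The real zero set of a real polynomial. -/
def zeroSetR (g : MvPolynomial (Fin n) ℝ) : Set (Fin n → ℝ) := {x | eval x g = 0}

/-- The zero locus of the polynomials `P 1, …, P i` (the first `i` members of a tuple of
polynomials indexed from `1`). -/
def zeroLocusUpTo (P : ℕ → MvPolynomial (Fin n) ℂ) (i : ℕ) : Set (Fin n → ℂ) :=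
  zeroLocus n {f | ∃ j : ℕ, 1 ≤ j ∧ j ≤ i ∧ f = P j}

/-- `V'` is an `(n-s)`-minimal variety of the irreducible variety `V`. -/
def IsMinimalVariety (V V' : Set (Fin n → ℂ)) (s : ℕ) : Prop :=
  IsIrredVariety n V' ∧ V ⊆ V' ∧ dim n V' = n - s ∧
    ∀ f ∈ vanishingIdeal n V, f ∉ vanishingIdeal n V' →
      partialDegE n V (s + 1) ≤ (f.totalDegree : ℕ∞)

/-- `S` is `(k,b)`-free with respect to `T`, for the incidence relation `R`. -/
def KBFree {α β : Type*} (R : α → β → Prop) (S : Finset α) (T : Finset β) (k b : ℕ) : Prop :=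
  ¬ ∃ (P : Finset α) (B : Finset β), P ⊆ S ∧ B ⊆ T ∧ P.card = k ∧ B.card = b ∧
      ∀ s ∈ P, ∀ t ∈ B, R s t

/-- The number of incidences between a finite set of points and a finite family of sets. -/
def incCountAbs {α : Type*} (S : Finset α) (T : Finset (Set α)) : ℕ :=
  ∑ t ∈ T, (↑S ∩ t).ncard

/-- The number of incidences between a finite set of real points and a finite family of
subsets of `ℂⁿ`. -/
def incCount (S : Finset (Fin n → ℝ)) (T : Finset (Set (Fin n → ℂ))) : ℕ :=
  ∑ t ∈ T, (↑S ∩ toC n ⁻¹' t).ncard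

/-- The total degree `deg T = ∑_{t ∈ T} deg t` of a finite family of algebraic sets. -/
def degFamily (T : Finset (Set (Fin n → ℂ))) : ℕ := ∑ t ∈ T, degreeSum n t

/-- The total degree of a finite family of irreducible varieties. -/
def degFamilyIrred (T : Finset (Set (Fin n → ℂ))) : ℕ := ∑ t ∈ T, degree n t

/-- `α_k(d)`. -/
def alpha (k d : ℕ) : ℝ :=
  if k = 1 ∧ d = 1 then 0 else (k : ℝ) * ((d : ℝ) - 1) / ((d : ℝ) * (k : ℝ) - 1)

/-- `β_k(d)`. -/
def beta (k d : ℕ) : ℝ :=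
  if k = 1 ∧ d = 1 then 1 else (d : ℝ) * ((k : ℝ) - 1) / ((d : ℝ) * (k : ℝ) - 1)

/-- `τ_d(b,k) = b^{1-β_k(d)} k^{1-α_k(d)}`. -/
def tauC (d b k : ℕ) : ℝ := (b : ℝ) ^ (1 - beta k d) * (k : ℝ) ^ (1 - alpha k d)

/-- The Chardin–Philippon property of the constant `c₀`: for every pure-dimensional algebraic
set `W ⊆ ℂⁿ` and every `m ≥ 2 (n - dim W) δ(W)` one has `H_{I(W)}(m) ≥ c₀ m^{dim W} deg W`. -/
def ChardinPhilippon (c0 : ℝ) : Prop :=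
  ∀ (W : Set (Fin n → ℂ)) (e : ℕ), IsAlgSetOfDim n W e →
    ∀ m : ℕ, 2 * (n - e) * deltaSet n W ≤ m →
      c0 * (m : ℝ) ^ e * (degreeSum n W : ℝ) ≤ (hilbert n W m : ℝ)

/-- The defining property of the constant `c₁`: for every irreducible variety `V`, every
positive integer lies in some interval `ℛ_i(V)` with `i` admissible with respect to `V`. -/
def CoversPositiveIntegers (c0 c1 : ℝ) : Prop :=
  ∀ V : Set (Fin n → ℂ), IsIrredVariety n V →
    ∀ m : ℕ, 0 < m → ∃ i, Admissible n V i ∧ (m : ℝ) ∈ RSet n c0 c1 V i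

/-- `i_V(M)`: the smallest admissible `i` such that `M^{n-i} Δ_i(V) ∈ ℛ_i(V)`. -/
def iV (c0 c1 : ℝ) (V : Set (Fin n → ℂ)) (M : ℕ) : ℕ :=
  sInf {i | Admissible n V i ∧ (M : ℝ) ^ (n - i) * Delta n V i ∈ RSet n c0 c1 V i}

/-- A real polynomial bisects a finite set `S ⊆ ℝⁿ` if it is positive on at most half of `S`
and negative on at most half of `S`. -/
def Bisects (g : MvPolynomial (Fin n) ℝ) (S : Finset (Fin n → ℝ)) : Prop :=
  ((↑S ∩ {x | 0 < eval x g}).ncard : ℝ) ≤ (S.card : ℝ) / 2 ∧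
    ((↑S ∩ {x | eval x g < 0}).ncard : ℝ) ≤ (S.card : ℝ) / 2

/-- The set of `r`-rich points of a family `T`: points lying in at least `r` members of `T`. -/
def richPts (T : Finset (Set (Fin n → ℂ))) (r : ℕ) : Set (Fin n → ℂ) :=
  {x | r ≤ ({t | t ∈ T ∧ x ∈ t} : Set (Set (Fin n → ℂ))).ncard}

/-- A real hypersurface of degree at most `D`: the real zero set of a nonzero real polynomial
of degree at most `D`. -/
def IsRealHypersurfaceDegLE (t : Set (Fin n → ℝ)) (D : ℕ) : Prop :=
  ∃ p : MvPolynomial (Fin n) ℝ, p ≠ 0 ∧ t = zeroSetR n p ∧ p.totalDegree ≤ D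

/-- Lexicographic comparison of the tuples `(f 1, …, f m)` and `(g 1, …, g m)`. -/
def LexLE (m : ℕ) (f g : ℕ → ℕ) : Prop :=
  (∀ j ∈ Finset.Icc 1 m, f j = g j) ∨
    ∃ i ∈ Finset.Icc 1 m, (∀ j, 1 ≤ j → j < i → f j = g j) ∧ f i < g i

/-!
For each `i` the polynomials of degree at most `δ_i(V)` in the definition of `δ_i(V)` cannot all
lie in a prime `q ⊆ I(V)` of height less than `i`, since otherwise some component of their zero
set through `V` would be too large. Starting from `q = 0` we may therefore cut `n - d` times by a
hypersurface containing `V`, the `i`-th of degree at most `δ_i(V)`, each time passing to a minimal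
prime contained in `I(V)`. Degrees are controlled by affine Hilbert functions: if `g ∈ J` is
regular modulo `I ⊆ J` and has degree at most `δ`, then `H_I(m) + H_J(m + δ) ≤ H_I(m + δ)`, so
growth `a m^e / e!` of `H_J` forces growth `(a / δ) m^(e+1) / (e+1)!` of `H_I`. The same
inequality, applied to the linear equations of an affine subspace meeting `V` in `N` points, gives
`H_{I(V)}` growth at least `N m^d / d!`: by dimension, each equation is regular modulo the previous
ones once the components missing all `N` points are discarded. Hence `H_0(m) ~ m^n / n!` grows at
least like `(N / ∏ δ_i(V)) m^n / n!`.
-/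

section DimensionTheory

variable {k : Type*} [Field k]

lemma height_eq_natCard_of_isMaximal {σ : Type*} [Finite σ] (M : Ideal (MvPolynomial σ k))
    [M.IsMaximal] : M.height = Nat.card σ := by
  induction σ using Finite.induction_empty_option with
  | of_equiv e ih =>
    let f := (renameEquiv k e.symm).toRingEquiv
    have : (M.map f).IsMaximal := Ideal.map_isMaximal_of_equiv f
    rw [← f.height_map, ih, Nat.card_congr e]
  | h_empty =>
    simpa using Ideal.height_le_ringKrullDim_of_ne_top (Ideal.IsMaximal.ne_top ‹M.IsMaximal›)
  | @h_option σ _ ih =>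
    let f := (optionEquivLeft k σ).toRingEquiv
    have : (M.map f).IsMaximal := Ideal.map_isMaximal_of_equiv f
    have : ((M.map f).under (MvPolynomial σ k)).IsMaximal :=
      Polynomial.isMaximal_comap_C_of_isJacobsonRing _
    have : (M.map f).LiesOver ((M.map f).under (MvPolynomial σ k)) := ⟨rfl⟩
    rw [← f.height_map, Polynomial.height_eq_height_add_one ((M.map f).under _), ih,
      Finite.card_option, Nat.cast_add_one]

lemma ringKrullDim_mvPolynomial_le_quotient_add_one {σ : Type*} [Finite σ]
    {f : MvPolynomial σ k} (hf : ¬ IsUnit f) :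
    ringKrullDim (MvPolynomial σ k) ≤ ringKrullDim (MvPolynomial σ k ⧸ Ideal.span {f}) + 1 := by
  obtain ⟨M, hM, hfM⟩ := exists_max_ideal_of_mem_nonunits hf
  calc ringKrullDim (MvPolynomial σ k) = M.height := by
        rw [height_eq_natCard_of_isMaximal M]; simp
    _ ≤ _ := Ideal.height_le_ringKrullDim_quotient_add_one hfM

lemma mem_minimalPrimes_of_le {A : Type*} [CommSemiring A] {I J P : Ideal A}
    (hP : P ∈ I.minimalPrimes) (hIJ : I ≤ J) (hJP : J ≤ P) : P ∈ J.minimalPrimes :=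
  ⟨⟨hP.isPrime, hJP⟩, fun _ hQ hQP => hP.2 ⟨hQ.1, hIJ.trans hQ.2⟩ hQP⟩

lemma height_map_quotientMk_add_one_le {A : Type*} [CommRing A] [IsDomain A] [IsNoetherianRing A]
    {P Q : Ideal A} [Q.IsPrime] (hP : P ≠ ⊥) (hPQ : P ≤ Q) :
    (Q.map (Ideal.Quotient.mk P)).height + 1 ≤ Q.height := by
  have := Ideal.isPrime_map_quotientMk_of_isPrime hPQ
  obtain ⟨l, hlast, hlen⟩ := (Q.map (Ideal.Quotient.mk P)).exists_ltSeries_length_eq_height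
  let l' := l.map (PrimeSpectrum.comap (Ideal.Quotient.mk P))
    (RingHom.strictMono_comap_of_surjective Ideal.Quotient.mk_surjective)
  have hP_le : P ≤ l'.head.asIdeal := by
    rw [LTSeries.head_map]
    exact (Ideal.mk_ker (I := P)).ge.trans (Ideal.comap_mono bot_le)
  have hbot : (⊥ : PrimeSpectrum A) < l'.head := by
    rw [← PrimeSpectrum.asIdeal_lt_asIdeal]
    exact (bot_lt_iff_ne_bot.2 hP).trans_le hP_le
  have hle : (l'.cons ⊥ hbot).last ≤ ⟨Q, ‹_›⟩ := by
    simp [l', hlast, ← PrimeSpectrum.asIdeal_le_asIdeal, Ideal.comap_map_mk hPQ]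
  rw [← hlen, (⟨Q, ‹_›⟩ : PrimeSpectrum A).height_eq_orderHeight]
  simpa [l'] using Order.length_le_height hle

lemma ringKrullDim_quotient_eq_coheight {A : Type*} [CommRing A] (P : PrimeSpectrum A) :
    ringKrullDim (A ⧸ P.asIdeal) = Order.coheight P := by
  rw [ringKrullDim_quotient, Order.coheight_eq_krullDim_Ici]
  rfl

section Integral

variable {A B : Type*} [CommRing A] [CommRing B] [Algebra A B] [Algebra.IsIntegral A B]

lemma ringKrullDim_le_of_isIntegral : ringKrullDim B ≤ ringKrullDim A :=
  Order.krullDim_le_of_strictMono (PrimeSpectrum.comap (algebraMap A B))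
    fun p q hpq => Ideal.IsIntegral.comap_lt_comap (I := p.asIdeal) (J := q.asIdeal) hpq

lemma ringKrullDim_quotient_under_le (Q : Ideal B) [Q.IsPrime] :
    ringKrullDim (A ⧸ Q.under A) ≤ ringKrullDim (B ⧸ Q) := by
  let P : PrimeSpectrum A := ⟨Q.under A, inferInstance⟩
  let Q' : PrimeSpectrum B := ⟨Q, ‹_›⟩
  change ringKrullDim (A ⧸ P.asIdeal) ≤ ringKrullDim (B ⧸ Q'.asIdeal)
  rw [ringKrullDim_quotient_eq_coheight, ringKrullDim_quotient_eq_coheight, WithBot.coe_le_coe]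
  refine Order.coheight_le fun l hl => ?_
  have : Q.LiesOver l.head.asIdeal := by rw [hl]; exact ⟨rfl⟩
  obtain ⟨L, hlen, hhead, -⟩ := Ideal.exists_ltSeries_of_hasGoingUp l Q
  rw [← hlen]
  exact Order.length_le_coheight hhead.ge

end Integral

lemma ringKrullDim_quotient_add_height_le {A : Type*} [CommRing A] (P : Ideal A) [P.IsPrime] :
    ringKrullDim (A ⧸ P) + P.height ≤ ringKrullDim A := by
  let P' : PrimeSpectrum A := ⟨P, ‹_›⟩
  change ringKrullDim (A ⧸ P'.asIdeal) + P'.asIdeal.height ≤ _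
  have : Nonempty (PrimeSpectrum A) := ⟨P'⟩
  rw [ringKrullDim_quotient_eq_coheight, P'.height_eq_orderHeight, ringKrullDim,
    Order.krullDim_eq_iSup_height_add_coheight_of_nonempty, add_comm]
  exact_mod_cast le_iSup (fun a : PrimeSpectrum A => Order.height a + Order.coheight a) P'

lemma exists_mvPolynomial_prime_of_finiteType (k : Type*) [Field k] {B : Type*} [CommRing B]
    [IsDomain B] [Algebra k B] [Algebra.FiniteType k B] (Q : Ideal B) [Q.IsPrime] :
    ∃ (s : ℕ) (P : Ideal (MvPolynomial (Fin s) k)), P.IsPrime ∧ P.height ≤ Q.height ∧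
      ringKrullDim (MvPolynomial (Fin s) k ⧸ P) ≤ ringKrullDim (B ⧸ Q) ∧
      ringKrullDim B ≤ ringKrullDim (MvPolynomial (Fin s) k) := by
  have : IsNoetherianRing B := Algebra.FiniteType.isNoetherianRing k B
  obtain ⟨s, g, hg, hint⟩ := exists_integral_inj_algHom_of_fg k B
  algebraize [g.toRingHom]
  have : FaithfulSMul (MvPolynomial (Fin s) k) B := (faithfulSMul_iff_algebraMap_injective _ _).2 hg
  refine ⟨s, Q.under _, inferInstance, ?_, ringKrullDim_quotient_under_le Q,
    ringKrullDim_le_of_isIntegral⟩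
  exact (Ideal.height_eq_height_add_of_liesOver_of_hasGoingDown
    (Q.under (MvPolynomial (Fin s) k)) Q).symm ▸ le_self_add

lemma ringKrullDim_mvPolynomial_le_quotient_add_height {s : ℕ}
    (P : Ideal (MvPolynomial (Fin s) k)) [P.IsPrime] :
    ringKrullDim (MvPolynomial (Fin s) k) ≤
      ringKrullDim (MvPolynomial (Fin s) k ⧸ P) + P.height := by
  obtain ⟨h, hh⟩ := ENat.ne_top_iff_exists.1 (Ideal.height_ne_top_of_isPrime (I := P))
  induction h using Nat.strong_induction_on generalizing s with
  | _ h ih =>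
  rcases eq_or_ne P ⊥ with rfl | hP
  · rw [ringKrullDim_eq_of_ringEquiv (RingEquiv.quotientBot (MvPolynomial (Fin s) k))]
    simp
  obtain ⟨f, hfP, hf⟩ := Ideal.IsPrime.exists_mem_prime_of_ne_bot ‹P.IsPrime› hP
  set F := Ideal.span {f}
  have : F.IsPrime := (Ideal.span_singleton_prime hf.ne_zero).2 hf
  have hFP : F ≤ P := (Ideal.span_singleton_le_iff_mem _).2 hfP
  have := Ideal.isPrime_map_quotientMk_of_isPrime hFP
  have hheight := height_map_quotientMk_add_one_le (by simpa [F] using hf.ne_zero) hFP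
  obtain ⟨t, Q, _, hQ, hquot, hdim⟩ :=
    exists_mvPolynomial_prime_of_finiteType k (P.map (Ideal.Quotient.mk F))
  have hQP : Q.height + 1 ≤ P.height := (add_le_add_left hQ 1).trans hheight
  obtain ⟨h', hh'⟩ := ENat.ne_top_iff_exists.1 (Ideal.height_ne_top_of_isPrime (I := Q))
  have hlt : h' < h := by rw [← hh', ← hh] at hQP; exact_mod_cast hQP
  rw [ringKrullDim_eq_of_ringEquiv (DoubleQuot.quotQuotEquivQuotOfLE hFP)] at hquot
  calc ringKrullDim (MvPolynomial (Fin s) k)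
      ≤ ringKrullDim (MvPolynomial (Fin s) k ⧸ F) + 1 :=
        ringKrullDim_mvPolynomial_le_quotient_add_one hf.not_isUnit
    _ ≤ ringKrullDim (MvPolynomial (Fin t) k) + 1 := by gcongr
    _ ≤ ringKrullDim (MvPolynomial (Fin t) k ⧸ Q) + Q.height + 1 := by
        gcongr
        exact ih h' hlt Q hh'
    _ ≤ ringKrullDim (MvPolynomial (Fin s) k ⧸ P) + P.height := by
        rw [add_assoc]
        exact add_le_add hquot (by exact_mod_cast hQP)

theorem ringKrullDim_quotient_add_height (k : Type*) [Field k] {B : Type*} [CommRing B] [IsDomain B]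
    [Algebra k B] [Algebra.FiniteType k B] (Q : Ideal B) [Q.IsPrime] :
    ringKrullDim (B ⧸ Q) + Q.height = ringKrullDim B := by
  refine (ringKrullDim_quotient_add_height_le Q).antisymm ?_
  obtain ⟨s, P, _, hheight, hquot, hdim⟩ := exists_mvPolynomial_prime_of_finiteType k Q
  calc ringKrullDim B ≤ ringKrullDim (MvPolynomial (Fin s) k) := hdim
    _ ≤ ringKrullDim (MvPolynomial (Fin s) k ⧸ P) + P.height :=
        ringKrullDim_mvPolynomial_le_quotient_add_height P
    _ ≤ ringKrullDim (B ⧸ Q) + Q.height := add_le_add hquot (WithBot.coe_le_coe.2 hheight)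

lemma exists_natCast_eq_ringKrullDim (k B : Type*) [Field k] [CommRing B] [IsDomain B] [Algebra k B]
    [Algebra.FiniteType k B] : ∃ m : ℕ, ringKrullDim B = m := by
  obtain ⟨s, -, -, -, -, hdim⟩ := exists_mvPolynomial_prime_of_finiteType k (⊥ : Ideal B)
  rw [MvPolynomial.ringKrullDim_of_isNoetherianRing, ringKrullDim_eq_zero_of_field, zero_add,
    Nat.card_fin] at hdim
  obtain ⟨m, hm⟩ := WithBot.ne_bot_iff_exists.1
    (WithBot.bot_lt_coe (0 : ℕ∞) |>.trans_le (ringKrullDim_nonneg_of_nontrivial (R := B))).ne'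
  rw [← hm] at hdim ⊢
  obtain ⟨m', rfl⟩ := ENat.ne_top_iff_exists.1
    (ne_top_of_le_ne_top (ENat.natCast_ne_top s) (by exact_mod_cast hdim))
  exact ⟨m', rfl⟩

/-- Krull's theorem only bounds the height of `Q / P`; the dimension formula transfers the bound to
`Q`. -/
lemma height_le_add_one_of_mem_minimalPrimes_sup_span (k : Type*) [Field k] {B : Type*}
    [CommRing B] [IsDomain B] [Algebra k B] [Algebra.FiniteType k B] {P Q : Ideal B} [P.IsPrime]
    {f : B} (hQ : Q ∈ (P ⊔ Ideal.span {f}).minimalPrimes) : Q.height ≤ P.height + 1 := by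
  have : IsNoetherianRing B := Algebra.FiniteType.isNoetherianRing k B
  have : Q.IsPrime := hQ.isPrime
  have hPQ : P ≤ Q := le_sup_left.trans hQ.le
  have := Ideal.isPrime_map_quotientMk_of_isPrime hPQ
  have hone : (Q.map (Ideal.Quotient.mk P)).height ≤ 1 :=
    Ideal.map_height_le_one_of_mem_minimalPrimes hQ
  have hdimP := ringKrullDim_quotient_add_height k (Q.map (Ideal.Quotient.mk P))
  rw [ringKrullDim_eq_of_ringEquiv (DoubleQuot.quotQuotEquivQuotOfLE hPQ)] at hdimP
  obtain ⟨m, hm⟩ := exists_natCast_eq_ringKrullDim k (B ⧸ Q)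
  have hle : ringKrullDim (B ⧸ Q) + Q.height ≤ ringKrullDim (B ⧸ Q) + (P.height + 1 : ℕ∞) :=
    calc ringKrullDim (B ⧸ Q) + Q.height = ringKrullDim (B ⧸ P) + P.height := by
          rw [ringKrullDim_quotient_add_height k Q, ringKrullDim_quotient_add_height k P]
      _ ≤ ringKrullDim (B ⧸ Q) + 1 + P.height := by
          rw [← hdimP]
          gcongr
          exact_mod_cast hone
      _ = ringKrullDim (B ⧸ Q) + (P.height + 1 : ℕ∞) := by
          push_cast
          rw [add_assoc, add_comm 1]
  rw [hm] at hle
  exact_mod_cast ENat.WithBot.add_le_add_natCast_left_iff.1 hle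

lemma height_le_add_length_of_mem_minimalPrimes_sup_ofList (k : Type*) [Field k] {B : Type*}
    [CommRing B] [IsDomain B] [Algebra k B] [Algebra.FiniteType k B] {P Q : Ideal B} [P.IsPrime]
    {fs : List B} (hQ : Q ∈ (P ⊔ Ideal.ofList fs).minimalPrimes) :
    Q.height ≤ P.height + fs.length := by
  induction fs generalizing P with
  | nil =>
    rw [Ideal.ofList_nil, sup_bot_eq, Ideal.minimalPrimes_eq_subsingleton_self] at hQ
    simp [mem_singleton_iff.1 hQ]
  | cons f fs ih =>
    rw [Ideal.ofList_cons, ← sup_assoc] at hQ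
    have := hQ.isPrime
    obtain ⟨P', hP', hP'Q⟩ := Ideal.exists_minimalPrimes_le (le_sup_left.trans hQ.le)
    have := hP'.isPrime
    have hQ' : Q ∈ (P' ⊔ Ideal.ofList fs).minimalPrimes :=
      mem_minimalPrimes_of_le hQ (sup_le_sup_right hP'.le _)
        (sup_le hP'Q (le_sup_right.trans hQ.le))
    calc Q.height ≤ P'.height + fs.length := ih hQ'
      _ ≤ P.height + 1 + fs.length := by
        gcongr
        exact height_le_add_one_of_mem_minimalPrimes_sup_span k hP'
      _ = P.height + (f :: fs).length := by
        rw [List.length_cons, Nat.cast_add_one, add_assoc, add_comm 1]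

lemma coheight_add_height_eq_natCard {σ : Type*} [Finite σ]
    (P : PrimeSpectrum (MvPolynomial σ k)) :
    Order.coheight P + P.asIdeal.height = Nat.card σ := by
  have h := ringKrullDim_quotient_add_height k P.asIdeal
  rw [ringKrullDim_quotient_eq_coheight, MvPolynomial.ringKrullDim_of_isNoetherianRing,
    ringKrullDim_eq_zero_of_field, zero_add] at h
  exact_mod_cast h

lemma exists_isPrime_le_height_eq {A : Type*} [CommRing A] [IsNoetherianRing A] {Q : Ideal A}
    [Q.IsPrime] {i : ℕ} (hi : i ≤ Q.height) : ∃ P ≤ Q, P.IsPrime ∧ P.height = i := by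
  rcases hi.eq_or_lt with hi | hi
  · exact ⟨Q, le_rfl, ‹_›, hi.symm⟩
  · let Q' : PrimeSpectrum A := ⟨Q, ‹_›⟩
    have hQ' : Order.height Q' = Q.height := Q'.height_eq_orderHeight.symm
    rw [← hQ'] at hi
    obtain ⟨P, hPQ, hP⟩ := (Order.coe_lt_height_iff
      (hQ' ▸ (Ideal.height_ne_top_of_isPrime (I := Q)).lt_top)).1 hi
    exact ⟨P.asIdeal, hPQ.le, P.2, P.height_eq_orderHeight.trans hP⟩

end DimensionTheory

section HilbertFunction

variable {σ k : Type*} [Field k]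

/-- The affine Hilbert function `m ↦ dim k[x]_{≤ m} / I_{≤ m}` of an ideal `I` of a polynomial ring,
encoded as the dimension of the image of `k[x]_{≤ m}` in `k[x] / I`. -/
def affineHilbert (I : Ideal (MvPolynomial σ k)) (m : ℕ) : ℕ :=
  Module.finrank k ((restrictTotalDegree σ k m).map (Ideal.Quotient.mkₐ k I).toLinearMap)

lemma restrictTotalDegree_mono : Monotone (restrictTotalDegree σ k) := fun _ _ h _ hf =>
  (mem_restrictTotalDegree _ _ _).2 (((mem_restrictTotalDegree _ _ _).1 hf).trans h)

lemma map_factor_map_restrictTotalDegree {I J : Ideal (MvPolynomial σ k)} (h : I ≤ J) (m : ℕ) :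
    ((restrictTotalDegree σ k m).map (Ideal.Quotient.mkₐ k I).toLinearMap).map
      (Ideal.Quotient.factorₐ k h).toLinearMap =
    (restrictTotalDegree σ k m).map (Ideal.Quotient.mkₐ k J).toLinearMap := by
  rw [← Submodule.map_comp]
  rfl

lemma finrank_restrictTotalDegree [Fintype σ] (m : ℕ) :
    Module.finrank k (restrictTotalDegree σ k m) =
      (m + Fintype.card σ).choose (Fintype.card σ) := by
  classical
  have : Fintype {s : σ →₀ ℕ | s.degree ≤ m} := (Finsupp.finite_of_degree_le m).fintype
  have slices : {s : σ →₀ ℕ | s.degree ≤ m} =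
      (((Finset.range (m + 1)).biUnion fun i => (Finset.univ : Finset σ).finsuppAntidiag i :
        Finset (σ →₀ ℕ)) : Set (σ →₀ ℕ)) := by
    ext s
    simp [Finsupp.degree_eq_sum]
  change Module.finrank k (restrictSupport k {s : σ →₀ ℕ | s.degree ≤ m}) = _
  rw [Module.finrank_eq_card_basis (basisRestrictSupport k _), ← Set.toFinset_card,
    Set.toFinset_congr slices, Finset.toFinset_coe, Finset.card_biUnion]
  · simp only [Finset.card_finsuppAntidiag_nat_eq_multichoose, Finset.card_univ]
    rw [Nat.sum_range_multichoose]
  · intro i _ j _ hij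
    rw [Function.onFun, Finset.disjoint_left]
    intro s hs hs'
    exact hij ((Finset.mem_finsuppAntidiag.1 hs).1.symm.trans (Finset.mem_finsuppAntidiag.1 hs').1)

variable [Finite σ]

lemma affineHilbert_mono (I : Ideal (MvPolynomial σ k)) : Monotone (affineHilbert I) :=
  fun _ _ h => Submodule.finrank_mono (Submodule.map_mono (restrictTotalDegree_mono h))

lemma affineHilbert_anti {I J : Ideal (MvPolynomial σ k)} (h : I ≤ J) (m : ℕ) :
    affineHilbert J m ≤ affineHilbert I m := by
  rw [affineHilbert, ← map_factor_map_restrictTotalDegree h]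
  exact Submodule.finrank_map_le _ _

lemma affineHilbert_add_le {I J : Ideal (MvPolynomial σ k)} (h : I ≤ J) {g : MvPolynomial σ k}
    (hgJ : g ∈ J) (hgI : ∀ f, g * f ∈ I → f ∈ I) {δ : ℕ} (hδ : g.totalDegree ≤ δ) (m : ℕ) :
    affineHilbert I m + affineHilbert J (m + δ) ≤ affineHilbert I (m + δ) := by
  let S := fun m => (restrictTotalDegree σ k m).map (Ideal.Quotient.mkₐ k I).toLinearMap
  let π := (Ideal.Quotient.factorₐ k h).toLinearMap
  let μ := LinearMap.mulLeft k (Ideal.Quotient.mk I g)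
  have rank_nullity : affineHilbert J (m + δ) +
      Module.finrank k (LinearMap.ker (π.domRestrict (S (m + δ)))) = affineHilbert I (m + δ) := by
    rw [affineHilbert, ← map_factor_map_restrictTotalDegree h, ← LinearMap.range_domRestrict]
    exact (π.domRestrict (S (m + δ))).finrank_range_add_finrank_ker
  have hμ : Function.Injective μ := (injective_iff_map_eq_zero μ).2 fun a ha => by
    obtain ⟨f, rfl⟩ := Ideal.Quotient.mk_surjective a
    rw [LinearMap.mulLeft_apply, ← map_mul, Ideal.Quotient.eq_zero_iff_mem] at ha
    exact Ideal.Quotient.eq_zero_iff_mem.2 (hgI f ha)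
  have image_le_ker : (S m).map μ ≤
      (LinearMap.ker (π.domRestrict (S (m + δ)))).map (S (m + δ)).subtype := by
    rintro _ ⟨_, ⟨f, hf, rfl⟩, rfl⟩
    have hgf : g * f ∈ restrictTotalDegree σ k (m + δ) := by
      have hf' : f.totalDegree ≤ m := (mem_restrictTotalDegree _ _ _).1 hf
      refine (mem_restrictTotalDegree _ _ _).2 ((totalDegree_mul _ _).trans ?_)
      lia
    exact ⟨⟨Ideal.Quotient.mk I (g * f), g * f, hgf, rfl⟩,
      Ideal.Quotient.eq_zero_iff_mem.2 (J.mul_mem_right f hgJ), map_mul (Ideal.Quotient.mk I) g f⟩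
  have kernel_bound : affineHilbert I m ≤
      Module.finrank k (LinearMap.ker (π.domRestrict (S (m + δ)))) := by
    rw [← Submodule.finrank_map_subtype_eq, affineHilbert,
      (Submodule.equivMapOfInjective μ hμ (S m)).finrank_eq]
    exact Submodule.finrank_mono image_le_ker
  lia

lemma sum_affineHilbert_le {I J : Ideal (MvPolynomial σ k)} (h : I ≤ J) {g : MvPolynomial σ k}
    (hgJ : g ∈ J) (hgI : ∀ f, g * f ∈ I → f ∈ I) {δ : ℕ} (hδ : g.totalDegree ≤ δ) (m : ℕ) :
    ∑ i ∈ Finset.range (m + δ), affineHilbert J i ≤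
      ∑ i ∈ Finset.range δ, affineHilbert I (m + i) := by
  induction m with
  | zero =>
    simp only [zero_add]
    exact Finset.sum_le_sum fun i _ => affineHilbert_anti h i
  | succ m ih =>
    have shift : ∑ i ∈ Finset.range δ, affineHilbert I (m + i) + affineHilbert I (m + δ) =
        ∑ i ∈ Finset.range δ, affineHilbert I (m + 1 + i) + affineHilbert I m := by
      rw [← Finset.sum_range_succ, Finset.sum_range_succ']
      simp only [add_zero, add_assoc, add_comm 1]
    rw [Nat.add_right_comm, Finset.sum_range_succ]
    have := affineHilbert_add_le h hgJ hgI hδ m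
    lia

lemma affineHilbert_le_choose (I : Ideal (MvPolynomial σ k)) (m : ℕ) :
    affineHilbert I m ≤ (m + Nat.card σ).choose (Nat.card σ) := by
  have := Fintype.ofFinite σ
  rw [Nat.card_eq_fintype_card, ← finrank_restrictTotalDegree (k := k)]
  exact Submodule.finrank_map_le _ _

/-- `D` times the affine Hilbert function of `I` grows at least like `N * m ^ e / e !`, up to a
shift of the argument: if `I` has dimension `e` and degree `a`, this says that `N ≤ D * a`. Keeping
`N` and `D` apart avoids dividing by `D`. -/
def HilbertGrowth (I : Ideal (MvPolynomial σ k)) (e N D : ℕ) : Prop :=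
  ∃ c, ∀ m, N * (m + e).choose e ≤ D * affineHilbert I (m + c)

lemma HilbertGrowth.anti {I J : Ideal (MvPolynomial σ k)} {e N D : ℕ}
    (hJ : HilbertGrowth J e N D) (h : I ≤ J) : HilbertGrowth I e N D :=
  hJ.imp fun _ hc m => (hc m).trans (Nat.mul_le_mul_left _ (affineHilbert_anti h _))

lemma HilbertGrowth.of_regular {I J : Ideal (MvPolynomial σ k)} {e N D : ℕ}
    (hJ : HilbertGrowth J e N D) (h : I ≤ J) {g : MvPolynomial σ k} (hgJ : g ∈ J)
    (hgI : ∀ f, g * f ∈ I → f ∈ I) {δ : ℕ} (hδ : g.totalDegree ≤ δ) :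
    HilbertGrowth I (e + 1) N (D * δ) := by
  obtain ⟨c, hc⟩ := hJ
  refine ⟨c + 1 + δ, fun m => ?_⟩
  calc N * (m + (e + 1)).choose (e + 1)
      = ∑ i ∈ Finset.range (m + 1), N * (i + e).choose e := by
        rw [← Finset.mul_sum, Nat.sum_range_add_choose, add_assoc]
    _ ≤ D * ∑ i ∈ Finset.range (m + 1), affineHilbert J (c + i) := by
        rw [Finset.mul_sum]
        exact Finset.sum_le_sum fun i _ => add_comm c i ▸ hc i
    _ ≤ D * ∑ i ∈ Finset.range (c + (m + 1) + δ), affineHilbert J i := by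
        rw [Finset.sum_range_add _ (c + (m + 1)), Finset.sum_range_add _ c]
        gcongr
        lia
    _ ≤ D * ∑ i ∈ Finset.range δ, affineHilbert I (c + (m + 1) + i) := by
        gcongr
        exact sum_affineHilbert_le h hgJ hgI hδ _
    _ ≤ D * ∑ i ∈ Finset.range δ, affineHilbert I (m + (c + 1 + δ)) := by
        gcongr with i hi
        refine affineHilbert_mono I ?_
        have := Finset.mem_range.1 hi
        lia
    _ = D * δ * affineHilbert I (m + (c + 1 + δ)) := by
        rw [Finset.sum_const, Finset.card_range, smul_eq_mul, mul_assoc]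

lemma le_of_forall_mul_choose_le {N D n c : ℕ}
    (h : ∀ m : ℕ, N * (m + n).choose n ≤ D * (m + c + n).choose n) : N ≤ D := by
  have ratio_bound (m : ℕ) : (N : ℝ) ≤ D * (1 + ((c + n : ℕ) : ℝ) * (1 / ((m : ℝ) + 1))) ^ n := by
    have lower : ((m + n + 1 - n : ℕ) ^ n : ℝ) / n.factorial ≤ (m + n).choose n :=
      Nat.pow_le_choose n (m + n)
    have upper : ((m + c + n).choose n : ℝ) ≤ ((m + c + n : ℕ) : ℝ) ^ n / n.factorial :=
      Nat.choose_le_pow_div n (m + c + n)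
    have powers : (N : ℝ) * ((m + 1) ^ n / n.factorial) ≤
        D * ((m + c + n) ^ n / n.factorial) := by
      rw [show m + n + 1 - n = m + 1 by lia] at lower
      push_cast at lower upper
      calc (N : ℝ) * ((m + 1) ^ n / n.factorial) ≤ N * (m + n).choose n := by gcongr
        _ ≤ D * (m + c + n).choose n := mod_cast h m
        _ ≤ _ := by gcongr
    rw [← mul_div_assoc, ← mul_div_assoc, div_le_div_iff_of_pos_right (by positivity)] at powers
    rw [show 1 + ((c + n : ℕ) : ℝ) * (1 / ((m : ℝ) + 1)) = (m + 1 + c + n) / (m + 1) by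
      push_cast; field_simp; ring, div_pow, ← mul_div_assoc, le_div_iff₀ (by positivity)]
    refine powers.trans ?_
    gcongr
    linarith
  have limit : Filter.Tendsto
      (fun m : ℕ => (D : ℝ) * (1 + ((c + n : ℕ) : ℝ) * (1 / ((m : ℝ) + 1))) ^ n)
      Filter.atTop (nhds ((D : ℝ) * (1 + ((c + n : ℕ) : ℝ) * 0) ^ n)) :=
    ((((tendsto_one_div_add_atTop_nhds_zero_nat).const_mul _).const_add _).pow n).const_mul _
  simpa using ge_of_tendsto' limit ratio_bound

lemma HilbertGrowth.le {I : Ideal (MvPolynomial σ k)} {N D : ℕ}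
    (h : HilbertGrowth I (Nat.card σ) N D) : N ≤ D := by
  obtain ⟨c, hc⟩ := h
  exact le_of_forall_mul_choose_le fun m =>
    (hc m).trans (Nat.mul_le_mul_left _ (affineHilbert_le_choose I _))

end HilbertFunction

section IsolatedPoints

variable {σ k : Type*} [Field k]

lemma exists_eval_eq_one_of_finset (Y : Finset (σ → k)) (y : σ → k) :
    ∃ f : MvPolynomial σ k, eval y f = 1 ∧ ∀ z ∈ Y, z ≠ y → eval z f = 0 := by
  classical
  have separate (z : σ → k) (hz : z ≠ y) : ∃ f : MvPolynomial σ k, eval y f = 1 ∧ eval z f = 0 := by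
    obtain ⟨i, hi⟩ := Function.ne_iff.1 hz
    refine ⟨C (y i - z i)⁻¹ * (X i - C (z i)), ?_, by simp⟩
    simp [inv_mul_cancel₀ (sub_ne_zero.2 hi.symm)]
  choose! f hf_one hf_zero using separate
  refine ⟨∏ z ∈ Y.erase y, f z, ?_, fun z hz hzy => ?_⟩
  · rw [map_prod]
    exact Finset.prod_eq_one fun z hz => hf_one z (Finset.ne_of_mem_erase hz)
  · rw [map_prod]
    exact Finset.prod_eq_zero (Finset.mem_erase.2 ⟨hzy, hz⟩) (hf_zero z hzy)

/-- The minimal primes of `p + (ls)` contained in the maximal ideal of some point of `Y`: the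
components through `Y` of the section of `Z(p)` by the hypersurfaces in the list `ls`. -/
def sectionPrimes (p : Ideal (MvPolynomial σ k)) (ls : List (MvPolynomial σ k))
    (Y : Finset (σ → k)) : Set (Ideal (MvPolynomial σ k)) :=
  {r ∈ (p ⊔ Ideal.ofList ls).minimalPrimes | ∃ y ∈ Y, r ≤ MvPolynomial.vanishingIdeal k {y}}

variable {p : Ideal (MvPolynomial σ k)} {ls ms : List (MvPolynomial σ k)} {Y : Finset (σ → k)}

lemma sInf_sectionPrimes_le_vanishingIdeal
    (hY : ∀ y ∈ Y, p ⊔ Ideal.ofList ls ≤ MvPolynomial.vanishingIdeal k {y}) :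
    sInf (sectionPrimes p ls Y) ≤ MvPolynomial.vanishingIdeal k (Y : Set (σ → k)) := by
  intro f hf y hy
  obtain ⟨r, hr, hry⟩ := Ideal.exists_minimalPrimes_le (hY y hy)
  have hle : sInf (sectionPrimes p ls Y) ≤ r := sInf_le ⟨hr, y, hy, hry⟩
  exact hry (hle hf) y rfl

lemma sInf_sectionPrimes_le_of_sublist (h : ls.Sublist ms) :
    sInf (sectionPrimes p ls Y) ≤ sInf (sectionPrimes p ms Y) := by
  refine le_sInf ?_
  rintro r ⟨hr, y, hy, hry⟩
  have : r.IsPrime := hr.isPrime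
  have hle : p ⊔ Ideal.ofList ls ≤ r :=
    (sup_le_sup_left (Ideal.span_mono fun _ hf => h.subset hf) p).trans hr.le
  obtain ⟨q, hq, hqr⟩ := Ideal.exists_minimalPrimes_le hle
  exact le_trans (sInf_le ⟨hq, y, hy, hqr.trans hry⟩) hqr

lemma mem_sInf_sectionPrimes {g : MvPolynomial σ k} (hg : g ∈ ls) :
    g ∈ sInf (sectionPrimes p ls Y) :=
  Ideal.mem_sInf.2 fun _ hr => hr.1.le (Ideal.mem_sup_right (Ideal.subset_span hg))

lemma zeroLocus_sup (I J : Ideal (MvPolynomial σ k)) :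
    MvPolynomial.zeroLocus k (I ⊔ J) = MvPolynomial.zeroLocus k I ∩ MvPolynomial.zeroLocus k J :=
  zeroLocus_vanishingIdeal_galoisConnection.l_sup

variable [Finite σ]

lemma exists_card_le_affineHilbert_vanishingIdeal (Y : Finset (σ → k)) :
    ∃ c, Y.card ≤ affineHilbert (MvPolynomial.vanishingIdeal k (Y : Set (σ → k))) c := by
  classical
  choose f hf_one hf_zero using exists_eval_eq_one_of_finset Y
  let c := Y.sup fun y => (f y).totalDegree
  let I := MvPolynomial.vanishingIdeal k (Y : Set (σ → k))
  let S := (restrictTotalDegree σ k c).map (Ideal.Quotient.mkₐ k I).toLinearMap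
  let v (y : Y) : S := ⟨Ideal.Quotient.mkₐ k I (f y), f y, (mem_restrictTotalDegree _ _ _).2
    (Finset.le_sup (f := fun y => (f y).totalDegree) y.2), rfl⟩
  have independent : LinearIndependent k v := by
    rw [Fintype.linearIndependent_iff]
    intro a ha y
    have hmem : ∑ z : Y, a z • f z ∈ I := by
      rw [← Ideal.Quotient.eq_zero_iff_mem, ← Ideal.Quotient.mkₐ_eq_mk k]
      simpa only [map_sum, map_smul, v, Submodule.coe_sum, Submodule.coe_smul,
        Submodule.coe_zero] using congrArg Subtype.val ha
    have hvanish : ∑ z : Y, a z * eval y.1 (f z) = 0 := by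
      simpa only [aeval_eq_eval, map_sum, smul_eval] using hmem y y.2
    rwa [Fintype.sum_eq_single y, hf_one, mul_one] at hvanish
    exact fun z hzy => by rw [hf_zero z y y.2 (Subtype.coe_ne_coe.2 hzy.symm), mul_zero]
  refine ⟨c, ?_⟩
  rw [← Fintype.card_coe]
  exact independent.fintype_card_le_finrank

lemma notMem_of_mem_sectionPrimes [p.IsPrime] {g : MvPolynomial σ k}
    (hheight : p.height + (ls ++ g :: ms).length ≤ Nat.card σ)
    (hY : ∀ y ∈ Y, MvPolynomial.vanishingIdeal k {y} ∈
      (p ⊔ Ideal.ofList (ls ++ g :: ms)).minimalPrimes)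
    {r : Ideal (MvPolynomial σ k)} (hr : r ∈ sectionPrimes p ls Y) : g ∉ r := by
  intro hg
  obtain ⟨hr, y, hy, hry⟩ := hr
  have : r.IsPrime := hr.isPrime
  have hle : p ⊔ Ideal.ofList (ls ++ g :: ms) ≤ r ⊔ Ideal.ofList ms := by
    rw [Ideal.ofList_append, Ideal.ofList_cons, ← sup_assoc, ← sup_assoc]
    exact sup_le_sup_right (sup_le hr.le ((Ideal.span_singleton_le_iff_mem r).2 hg)) _
  have hms : Ideal.ofList ms ≤ MvPolynomial.vanishingIdeal k {y} :=
    (Ideal.span_mono fun f hf => by simp_all).trans (le_sup_right.trans (hY y hy).le)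
  have hmin := mem_minimalPrimes_of_le (hY y hy) hle (sup_le hry hms)
  have hheight_point := height_le_add_length_of_mem_minimalPrimes_sup_ofList k hmin
  have hheight_r := height_le_add_length_of_mem_minimalPrimes_sup_ofList k hr
  rw [height_eq_natCard_of_isMaximal] at hheight_point
  have := (hheight.trans hheight_point).trans (add_le_add_left hheight_r _)
  obtain ⟨h, hh⟩ := ENat.ne_top_iff_exists.1 (Ideal.height_ne_top_of_isPrime (I := p))
  rw [← hh, List.length_append, List.length_cons] at this
  norm_cast at this
  lia

theorem hilbertGrowth_sInf_sectionPrimes [p.IsPrime]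
    (hheight : p.height + (ls ++ ms).length ≤ Nat.card σ)
    (hdeg : ∀ g ∈ ms, g.totalDegree ≤ 1)
    (hY : ∀ y ∈ Y, MvPolynomial.vanishingIdeal k {y} ∈
      (p ⊔ Ideal.ofList (ls ++ ms)).minimalPrimes) :
    HilbertGrowth (sInf (sectionPrimes p ls Y)) ms.length Y.card 1 := by
  induction ms generalizing ls with
  | nil =>
    obtain ⟨c, hc⟩ := exists_card_le_affineHilbert_vanishingIdeal Y
    refine HilbertGrowth.anti ⟨c, fun m => ?_⟩ (sInf_sectionPrimes_le_vanishingIdeal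
      fun y hy => by simpa using (hY y hy).le)
    simpa using hc.trans (affineHilbert_mono _ (Nat.le_add_left c m))
  | cons g ms ih =>
    rw [List.forall_mem_cons] at hdeg
    have hsplit : ls ++ g :: ms = (ls ++ [g]) ++ ms := by simp
    have hgrowth := ih (ls := ls ++ [g]) (hsplit ▸ hheight) hdeg.2 (hsplit ▸ hY)
    refine hgrowth.of_regular (sInf_sectionPrimes_le_of_sublist (List.sublist_append_left _ _))
      (mem_sInf_sectionPrimes (by simp)) (fun f hf => Ideal.mem_sInf.2 fun {r} hr => ?_) hdeg.1
    exact (hr.1.isPrime.mem_or_mem (Ideal.mem_sInf.1 hf hr)).resolve_left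
      (notMem_of_mem_sectionPrimes hheight hY hr)

theorem hilbertGrowth_of_isolated_points [p.IsPrime]
    (hheight : p.height + ls.length ≤ Nat.card σ) (hdeg : ∀ g ∈ ls, g.totalDegree ≤ 1)
    (hY : ∀ y ∈ Y, MvPolynomial.vanishingIdeal k {y} ∈ (p ⊔ Ideal.ofList ls).minimalPrimes) :
    HilbertGrowth p ls.length Y.card 1 :=
  (hilbertGrowth_sInf_sectionPrimes (ls := []) hheight hdeg hY).anti
    (le_sInf fun _ hr => le_sup_left.trans hr.1.le)

lemma vanishingIdeal_singleton_mem_minimalPrimes [IsAlgClosed k] {I : Ideal (MvPolynomial σ k)}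
    (hfin : (MvPolynomial.zeroLocus k I).Finite) {x : σ → k} (hx : x ∈ MvPolynomial.zeroLocus k I) :
    MvPolynomial.vanishingIdeal k {x} ∈ I.minimalPrimes := by
  have hIx : I ≤ MvPolynomial.vanishingIdeal k {x} :=
    le_zeroLocus_iff_le_vanishingIdeal.1 (singleton_subset_iff.2 hx)
  obtain ⟨r, hr, hrx⟩ := Ideal.exists_minimalPrimes_le hIx
  have : r.IsPrime := hr.isPrime
  have hfin' := hfin.subset (zeroLocus_anti_mono hr.le)
  have hinf : hfin'.toFinset.inf (fun z => MvPolynomial.vanishingIdeal k {z}) ≤ r := by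
    intro f hf
    rw [← MvPolynomial.IsPrime.vanishingIdeal_zeroLocus (K := k) r]
    exact fun z hz => Finset.inf_le (f := fun z => MvPolynomial.vanishingIdeal k {z})
      (hfin'.mem_toFinset.2 hz) hf z rfl
  obtain ⟨z, -, hzr⟩ := (Ideal.IsPrime.inf_le' ‹_›).1 hinf
  rwa [← (inferInstance : (MvPolynomial.vanishingIdeal k {z}).IsMaximal).eq_of_le
    (inferInstance : (MvPolynomial.vanishingIdeal k {x}).IsPrime).ne_top (hzr.trans hrx),
    (inferInstance : (MvPolynomial.vanishingIdeal k {z}).IsMaximal).eq_of_le this.ne_top hzr]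

lemma exists_list_zeroLocus_eq_affineSubspace (L : AffineSubspace k (σ → k))
    (hL : (L : Set (σ → k)).Nonempty) :
    ∃ ls : List (MvPolynomial σ k), ls.length + Module.finrank k L.direction = Nat.card σ ∧
      (∀ f ∈ ls, f.totalDegree ≤ 1) ∧ MvPolynomial.zeroLocus k (Ideal.ofList ls) = L := by
  classical
  have := Fintype.ofFinite σ
  obtain ⟨x₀, hx₀⟩ := hL
  let b := Module.finBasis k ((σ → k) ⧸ L.direction)
  let ℓ := L.direction.mkQ.toMvPolynomial (Pi.basisFun k σ) b
  have heval (i) (x : σ → k) : eval x (ℓ i) = b.repr (L.direction.mkQ x) i := by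
    have hx : (Pi.basisFun k σ).repr.symm (Finsupp.equivFunOnFinite.symm x) = x :=
      (LinearEquiv.symm_apply_eq _).2 (by ext; simp)
    simpa only [hx, Finsupp.coe_equivFunOnFinite_symm] using
      LinearMap.toMvPolynomial_eval_eq_apply (Pi.basisFun k σ) b L.direction.mkQ i
        (Finsupp.equivFunOnFinite.symm x)
  refine ⟨List.ofFn fun i => ℓ i - C (eval x₀ (ℓ i)), ?_, ?_, ?_⟩
  · rw [List.length_ofFn, Submodule.finrank_quotient_add_finrank, Module.finrank_pi,
      Nat.card_eq_fintype_card]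
  · simp only [List.forall_mem_ofFn_iff]
    intro i
    exact (totalDegree_sub_C_le _ _).trans (LinearMap.toMvPolynomial_totalDegree_le _ _ _ i)
  · ext x
    rw [Ideal.ofList, zeroLocus_span]
    simp only [Set.mem_ofPred_eq, List.forall_mem_ofFn_iff, aeval_eq_eval, map_sub, eval_C, heval,
      sub_eq_zero, SetLike.mem_coe]
    rw [← DFunLike.ext_iff, b.repr.injective.eq_iff, ← sub_eq_zero, ← map_sub,
      Submodule.mkQ_apply, Submodule.Quotient.mk_eq_zero]
    exact AffineSubspace.vsub_right_mem_direction_iff_mem hx₀ x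

theorem hilbertGrowth_ncard_inter_affineSubspace [IsAlgClosed k] (p : Ideal (MvPolynomial σ k))
    [p.IsPrime] (L : AffineSubspace k (σ → k)) (hL : p.height ≤ Module.finrank k L.direction)
    (hfin : (MvPolynomial.zeroLocus k p ∩ L).Finite) :
    HilbertGrowth p (Nat.card σ - Module.finrank k L.direction)
      (MvPolynomial.zeroLocus k p ∩ L).ncard 1 := by
  rcases (L : Set (σ → k)).eq_empty_or_nonempty with hempty | hne
  · exact ⟨0, fun m => by simp [hempty]⟩
  obtain ⟨ls, hlength, hdeg, hls⟩ := exists_list_zeroLocus_eq_affineSubspace L hne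
  rw [← hls, ← zeroLocus_sup] at hfin ⊢
  rw [Set.ncard_eq_toFinset_card _ hfin, ← hlength, Nat.add_sub_cancel]
  refine hilbertGrowth_of_isolated_points ?_ hdeg fun y hy =>
    vanishingIdeal_singleton_mem_minimalPrimes hfin (hfin.mem_toFinset.1 hy)
  rw [← hlength, Nat.cast_add, add_comm]
  gcongr

end IsolatedPoints

section Varieties

variable {n : ℕ} {V : Set (Fin n → ℂ)}

local notation "R" => MvPolynomial (Fin n) ℂ

lemma subset_zeroLocus_iff {I : Ideal R} :
    V ⊆ zeroLocus n (I : Set R) ↔ I ≤ vanishingIdeal n V :=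
  ⟨fun h f hf _ hx => h hx f hf, fun h _ hx _ hf => h hf _ hx⟩

lemma zeroLocus_eq_zeroLocus_span (I : Set R) :
    zeroLocus n I = zeroLocus n (Ideal.span I : Set R) :=
  (zeroLocus_span (K := ℂ) I).symm

lemma zeroLocus_vanishingIdeal (hV : IsAlgebraicSet n V) :
    zeroLocus n (vanishingIdeal n V : Set R) = V := by
  obtain ⟨I, rfl⟩ := hV
  refine Subset.antisymm ?_ (subset_zeroLocus_iff.2 le_rfl)
  exact fun x hx f hf => hx f fun y hy => hy f hf

lemma vanishingIdeal_zeroLocus (p : Ideal R) [p.IsPrime] :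
    vanishingIdeal n (zeroLocus n (p : Set R)) = p :=
  MvPolynomial.IsPrime.vanishingIdeal_zeroLocus (K := ℂ) p

lemma isPrime_vanishingIdeal (hV : IsIrredVariety n V) : (vanishingIdeal n V).IsPrime := by
  obtain ⟨-, ⟨x, hx⟩, hirred⟩ := hV
  refine ⟨fun htop => ?_, fun {f g} hfg => ?_⟩
  · simpa using (Ideal.eq_top_iff_one _).1 htop x hx
  · have hcover : V ⊆ zeroLocus n {f} ∪ zeroLocus n {g} := fun y hy => by
      simpa [zeroLocus] using hfg y hy
    exact (hirred _ _ ⟨_, rfl⟩ ⟨_, rfl⟩ hcover).imp (fun h y hy => h hy f rfl)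
      (fun h y hy => h hy g rfl)

lemma isIrredVariety_zeroLocus (p : Ideal R) [hp : p.IsPrime] :
    IsIrredVariety n (zeroLocus n (p : Set R)) := by
  refine ⟨⟨_, rfl⟩, ?_, fun V₁ V₂ hV₁ hV₂ hcover => ?_⟩
  · by_contra! hempty
    refine hp.ne_top ((vanishingIdeal_zeroLocus p).symm.trans ?_)
    rw [hempty]
    exact MvPolynomial.vanishingIdeal_empty
  · rw [← zeroLocus_vanishingIdeal hV₁, ← zeroLocus_vanishingIdeal hV₂, subset_zeroLocus_iff,
      subset_zeroLocus_iff, vanishingIdeal_zeroLocus, ← hp.mul_le, Ideal.mul_le]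
    intro f hf g hg
    rw [← vanishingIdeal_zeroLocus p]
    intro x hx
    rw [map_mul, mul_eq_zero]
    exact (hcover hx).imp (hf x) (hg x)

/-- The Nullstellensatz as an inclusion-reversing bijection between irreducible varieties in `ℂⁿ`
and prime ideals of `ℂ[x₁, …, xₙ]`. -/
def irredVarietyOrderIso :
    {V : Set (Fin n → ℂ) // IsIrredVariety n V} ≃o (PrimeSpectrum R)ᵒᵈ where
  toFun V := OrderDual.toDual ⟨vanishingIdeal n V, isPrime_vanishingIdeal V.2⟩
  invFun p := ⟨zeroLocus n ((OrderDual.ofDual p).asIdeal : Set R), isIrredVariety_zeroLocus _⟩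
  left_inv V := Subtype.ext (zeroLocus_vanishingIdeal V.2.1)
  right_inv p := congrArg OrderDual.toDual (PrimeSpectrum.ext (vanishingIdeal_zeroLocus _))
  map_rel_iff' {V W} := by
    change vanishingIdeal n W ≤ vanishingIdeal n V ↔ V.1 ⊆ W.1
    rw [← subset_zeroLocus_iff, zeroLocus_vanishingIdeal W.2.1]

lemma hasChain_iff_le_height (hV : IsIrredVariety n V) {d : ℕ} :
    HasChain n V d ↔ d ≤ Order.height (⟨V, hV⟩ : {V // IsIrredVariety n V}) := by
  constructor
  · rintro ⟨W, hW, hmono, hlast⟩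
    let chain : LTSeries {V // IsIrredVariety n V} :=
      LTSeries.mk d (fun i => ⟨W i, hW i⟩) (fun i j hij => hmono i j hij)
    exact Order.length_le_height (p := chain) hlast
  · intro h
    obtain ⟨chain, hlast, rfl⟩ := Order.exists_series_of_le_height _ h
    exact ⟨fun i => chain i, fun i => (chain i).2, fun i j hij => chain.strictMono hij,
      (congrArg Subtype.val hlast).le⟩

lemma dim_add_height_vanishingIdeal (hV : IsIrredVariety n V) :
    (dim n V : ℕ∞) + (vanishingIdeal n V).height = n := by
  let P : PrimeSpectrum R := ⟨vanishingIdeal n V, isPrime_vanishingIdeal hV⟩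
  have hcodim : Order.coheight P + (vanishingIdeal n V).height = n := by
    simpa using coheight_add_height_eq_natCard P
  have hheight : Order.height (⟨V, hV⟩ : {V // IsIrredVariety n V}) = Order.coheight P :=
    (Order.height_orderIso irredVarietyOrderIso _).symm
  obtain ⟨e, he⟩ : ∃ e : ℕ, (e : ℕ∞) = Order.coheight P :=
    ENat.ne_top_iff_exists.1 fun htop => by simp [htop] at hcodim
  have hdim : dim n V = e := by
    have : {d | HasChain n V d} = Set.Iic e := by
      ext d
      rw [Set.mem_ofPred_eq, hasChain_iff_le_height hV, hheight, ← he, Nat.cast_le, Set.mem_Iic]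
    rw [dim, this, csSup_Iic]
  rw [hdim, he, hcodim]

lemma dim_le (hV : IsIrredVariety n V) : dim n V ≤ n := by
  exact_mod_cast le_self_add.trans_eq (dim_add_height_vanishingIdeal hV)

lemma height_vanishingIdeal (hV : IsIrredVariety n V) :
    (vanishingIdeal n V).height = (n - dim n V : ℕ) := by
  rw [ENat.natCast_sub, ← dim_add_height_vanishingIdeal hV,
    (ENat.addLECancellable_natCast _).add_tsub_cancel_left]

lemma dim_zeroLocus_add_height (p : Ideal R) [p.IsPrime] :
    (dim n (zeroLocus n (p : Set R)) : ℕ∞) + p.height = n := by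
  simpa only [vanishingIdeal_zeroLocus] using
    dim_add_height_vanishingIdeal (isIrredVariety_zeroLocus p)

lemma isIrredComponent_zeroLocus_of_mem_minimalPrimes {I : Set R} {r : Ideal R}
    (hr : r ∈ (Ideal.span I).minimalPrimes) :
    IsIrredComponent n (zeroLocus n (r : Set R)) (zeroLocus n I) := by
  have : r.IsPrime := hr.isPrime
  rw [zeroLocus_eq_zeroLocus_span I]
  refine ⟨isIrredVariety_zeroLocus r, fun x hx f hf => hx f (hr.le hf), fun W hW hrW hWI => ?_⟩
  have hWr : vanishingIdeal n W ≤ r := by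
    rwa [← zeroLocus_vanishingIdeal hW.1, subset_zeroLocus_iff, vanishingIdeal_zeroLocus] at hrW
  have hrW' : r ≤ vanishingIdeal n W :=
    hr.2 ⟨isPrime_vanishingIdeal hW, subset_zeroLocus_iff.1 hWI⟩ hWr
  rw [hrW'.antisymm hWr, zeroLocus_vanishingIdeal hW.1]

lemma maxCompDimEq_zeroLocus (p : Ideal R) [p.IsPrime] (hV : V ⊆ zeroLocus n (p : Set R)) :
    MaxCompDimEq n (zeroLocus n (p : Set R)) V (dim n (zeroLocus n (p : Set R))) := by
  have hp := isIrredVariety_zeroLocus p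
  refine ⟨⟨_, ⟨hp, subset_rfl, fun W _ hpW hWp => hWp.antisymm hpW⟩, hV, rfl⟩, fun W hW _ => ?_⟩
  rw [hW.2.2 _ hp hW.2.1 subset_rfl]

lemma exists_finset_totalDegree_le_partialDeg (hV : IsIrredVariety n V) {i : ℕ} (hi : i ≠ 0)
    (hin : i ≤ n - dim n V) :
    ∃ I : Finset R, (∀ f ∈ I, f.totalDegree ≤ partialDeg n V i) ∧ V ⊆ zeroLocus n ↑I ∧
      MaxCompDimEq n (zeroLocus n ↑I) V (n - i) := by
  rw [partialDeg, if_neg hi]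
  refine Nat.sInf_mem (s := {δ | ∃ I : Finset R, (∀ f ∈ I, f.totalDegree ≤ δ) ∧
    V ⊆ zeroLocus n ↑I ∧ MaxCompDimEq n (zeroLocus n ↑I) V (n - i)}) ?_
  have := isPrime_vanishingIdeal hV
  obtain ⟨p, hpV, hp, hheight⟩ := exists_isPrime_le_height_eq
    (Q := vanishingIdeal n V) (i := i) (by rw [height_vanishingIdeal hV]; exact_mod_cast hin)
  obtain ⟨I, rfl⟩ : p.FG := IsNoetherian.noetherian p
  have hVI := subset_zeroLocus_iff.2 hpV
  have hdim : dim n (zeroLocus n (Ideal.span (I : Set R) : Set R)) = n - i := by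
    have := dim_zeroLocus_add_height (Ideal.span (I : Set R))
    rw [hheight] at this
    norm_cast at this
    lia
  refine ⟨I.sup totalDegree, I, fun f hf => Finset.le_sup hf, ?_⟩
  rw [zeroLocus_eq_zeroLocus_span, ← hdim]
  exact ⟨hVI, maxCompDimEq_zeroLocus _ hVI⟩

lemma exists_mem_vanishingIdeal_totalDegree_le_partialDeg (hV : IsIrredVariety n V) {j : ℕ}
    (hj : j + 1 ≤ n - dim n V) {q : Ideal R} [q.IsPrime] (hqV : q ≤ vanishingIdeal n V)
    (hq : q.height ≤ j) :
    ∃ f ∈ vanishingIdeal n V, f ∉ q ∧ f.totalDegree ≤ partialDeg n V (j + 1) := by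
  obtain ⟨I, hdeg, hVI, -, hmax⟩ := exists_finset_totalDegree_le_partialDeg hV j.succ_ne_zero hj
  suffices ∃ f ∈ I, f ∉ q by
    obtain ⟨f, hfI, hfq⟩ := this
    exact ⟨f, fun x hx => hVI hx f hfI, hfq, hdeg f hfI⟩
  by_contra! hIq
  obtain ⟨r, hr, hrq⟩ := Ideal.exists_minimalPrimes_le (Ideal.span_le.2 hIq)
  have : r.IsPrime := hr.isPrime
  have hdim := hmax _ (isIrredComponent_zeroLocus_of_mem_minimalPrimes hr)
    (subset_zeroLocus_iff.2 (hrq.trans hqV))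
  have hcontra : (n : ℕ∞) ≤ (n - (j + 1) : ℕ) + j :=
    calc (n : ℕ∞) = dim n (zeroLocus n (r : Set R)) + r.height := (dim_zeroLocus_add_height r).symm
      _ ≤ (n - (j + 1) : ℕ) + j :=
        add_le_add (Nat.cast_le.2 hdim) ((Ideal.height_mono hrq).trans hq)
  norm_cast at hcontra
  lia

lemma exists_isPrime_hilbertGrowth_succ (hV : IsIrredVariety n V) {j : ℕ}
    (hj : j + 1 ≤ n - dim n V) {q : Ideal R} [q.IsPrime] (hqV : q ≤ vanishingIdeal n V)
    (hq : q.height ≤ j) :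
    ∃ r ≤ vanishingIdeal n V, r.IsPrime ∧ r.height ≤ (j + 1 : ℕ) ∧ ∀ e N D,
      HilbertGrowth r e N D → HilbertGrowth q (e + 1) N (D * partialDeg n V (j + 1)) := by
  obtain ⟨f, hfV, hfq, hdeg⟩ := exists_mem_vanishingIdeal_totalDegree_le_partialDeg hV hj hqV hq
  have := isPrime_vanishingIdeal hV
  obtain ⟨r, hr, hrV⟩ := Ideal.exists_minimalPrimes_le
    (sup_le hqV ((Ideal.span_singleton_le_iff_mem _).2 hfV))
  refine ⟨r, hrV, hr.isPrime, ?_, fun e N D hgrowth => ?_⟩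
  · refine (height_le_add_one_of_mem_minimalPrimes_sup_span ℂ hr).trans ?_
    rw [Nat.cast_succ]
    gcongr
  · exact hgrowth.of_regular (le_sup_left.trans hr.le)
      (hr.le (Ideal.mem_sup_right (Ideal.mem_span_singleton_self f)))
      (fun g hfg => (‹q.IsPrime›.mem_or_mem hfg).resolve_left hfq) hdeg

theorem exists_isPrime_hilbertGrowth_bot (hV : IsIrredVariety n V) {j : ℕ}
    (hj : j ≤ n - dim n V) :
    ∃ q ≤ vanishingIdeal n V, q.IsPrime ∧ q.height ≤ j ∧ ∀ e N D, HilbertGrowth q e N D →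
      HilbertGrowth (⊥ : Ideal R) (e + j) N (D * ∏ i ∈ Finset.Icc 1 j, partialDeg n V i) := by
  induction j with
  | zero => exact ⟨⊥, bot_le, Ideal.isPrime_bot, by simp, by simp⟩
  | succ j ih =>
    obtain ⟨q, hqV, hq, hheight, hbot⟩ := ih (by lia)
    obtain ⟨r, hrV, hr, hr_height, hstep⟩ := exists_isPrime_hilbertGrowth_succ hV hj hqV hheight
    refine ⟨r, hrV, hr, hr_height, fun e N D hgrowth => ?_⟩
    rw [Finset.prod_Icc_succ_top (by lia), mul_comm (Finset.prod _ _), ← mul_assoc,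
      show e + (j + 1) = e + 1 + j by lia]
    exact hbot _ _ _ (hstep _ _ _ hgrowth)

end Varieties

/-- Corollary 5.4 of the paper: `deg V ≤ ∏_{i=1}^{n-d} δ_i(V)` for every
irreducible variety `V ⊆ ℂⁿ` of dimension `d`. -/
theorem statement16 (n : ℕ) (V : Set (Fin n → ℂ)) (d : ℕ)
    (hV : IsIrredVariety n V) (hd : dim n V = d) :
    degree n V ≤ ∏ i ∈ Finset.Icc 1 (n - d), partialDeg n V i := by
  subst hd
  have hprime := isPrime_vanishingIdeal hV
  refine csSup_le' ?_
  rintro N ⟨L, hL, hfin, rfl⟩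
  have hzero : MvPolynomial.zeroLocus ℂ (vanishingIdeal n V) = V := zeroLocus_vanishingIdeal hV.1
  have hsection : HilbertGrowth (vanishingIdeal n V) (dim n V) (V ∩ ↑L).ncard 1 := by
    simpa only [hzero, hL, Nat.card_fin, Nat.sub_sub_self (dim_le hV)] using
      hilbertGrowth_ncard_inter_affineSubspace (vanishingIdeal n V) L
        (by rw [hL, height_vanishingIdeal hV]) (by rwa [hzero])
  obtain ⟨q, hqV, -, -, hbot⟩ := exists_isPrime_hilbertGrowth_bot hV le_rfl
  have hgrowth := hbot _ _ _ (hsection.anti hqV)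
  rw [one_mul, Nat.add_sub_cancel' (dim_le hV)] at hgrowth
  exact HilbertGrowth.le (σ := Fin n) (by rwa [Nat.card_fin])

end Paper
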